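/- arXiv:2108.12487 — 2 statements merged into one kernel-verified Lean document; each statement's English description precedes it below -/
import Mathlib

section
/- Let x : ℕ → ℝ be a sequence of positive real numbers, let s_n = x_0 + ⋯ + x_n with s_{−1} = 0, and let g_n ∈ SL(2,ℝ) be the matrix [[(s_{n−1}+s_n)/(s_n−s_{n−1}), −2·s_{n−1}·s_n/(s_n−s_{n−1})], [−2/(s_n−s_{n−1}), (s_{n−1}+s_n)/(s_n−s_{n−1})]]. Then for every n ≥ 1, the translation length of g_n on the upper half-plane equals l_n = log( (s_{n−1}+s_n+2√(s_{n−1}·s_n)) / (s_{n−1}+s_n−2√(s_{n−1}·s_n)) ); that is, the infimum over z ∈ ℍ of the hyperbolic distance dist(z, g_n·z) equals l_n. -/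
/-- Partial sums of `x`: `sPartial x n = x 0 + ⋯ + x (n-1)`.  Thus
`sPartial x 0 = 0` realizes the convention `s_{-1} = 0`, and for `n ∈ ℕ`,
`s_n = sPartial x (n+1)` and `s_{n-1} = sPartial x n`. -/
noncomputable def sPartial (x : ℕ → ℝ) (n : ℕ) : ℝ := ∑ i ∈ Finset.range n, x i

/-- The matrix `g_n` of the paper, where `s_{n-1} = sPartial x n` and
`s_n = sPartial x (n+1)`:
`[[(s_{n−1}+s_n)/(s_n−s_{n−1}), −2·s_{n−1}·s_n/(s_n−s_{n−1})],
  [−2/(s_n−s_{n−1}), (s_{n−1}+s_n)/(s_n−s_{n−1})]]`. -/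
noncomputable def gMat (x : ℕ → ℝ) (n : ℕ) : Matrix (Fin 2) (Fin 2) ℝ :=
  !![(sPartial x n + sPartial x (n + 1)) / (sPartial x (n + 1) - sPartial x n),
      -2 * sPartial x n * sPartial x (n + 1) / (sPartial x (n + 1) - sPartial x n);
      -2 / (sPartial x (n + 1) - sPartial x n),
      (sPartial x n + sPartial x (n + 1)) / (sPartial x (n + 1) - sPartial x n)]

/-!
Write `g = [[a, b], [c, d]] ∈ SL(2, ℝ)`, `z = x + i y` and `Q z = c |z|² + (d - a) x - b`. Since
`z - g z = (c z² + (d - a) z - b) / (c z + d)` and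
`|c z² + (d - a) z - b|² = (Q z)² + (tr² - 4) y²`, the displacement satisfies
`4 cosh² (dist z (g z) / 2) = tr² + (Q z / y)²`. If `g` is hyperbolic, then `Q` vanishes somewhere
on `ℍ`, so the displacement has minimum `2 arcosh (|tr| / 2)`. For `gₙ`, half the trace is
`(sₙ₋₁ + sₙ) / (sₙ - sₙ₋₁)`.
-/

section TranslationLength

open Matrix UpperHalfPlane
open scoped MatrixGroups

/-- The translation length of `g` acting on the metric space `X`: the infimum of the displacement
`x ↦ dist x (g • x)`. -/
noncomputable def translationLength {G : Type*} (X : Type*) [SMul G X] [Dist X] (g : G) : ℝ :=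
  ⨅ x : X, dist x (g • x)

/-- The value at `(z, 1)` of the Hermitian form attached to `m = [[a, b], [c, d]]`, namely
`c |z|² + (d - a) Re z - b`. For hyperbolic `m`, its zero locus in the upper half-plane is the axis
of `m`, the geodesic joining the two fixed points on the boundary. -/
def axisForm (m : Matrix (Fin 2) (Fin 2) ℝ) (z : ℂ) : ℝ :=
  m 1 0 * Complex.normSq z + (m 1 1 - m 0 0) * z.re - m 0 1

theorem normSq_fixedPointPolynomial_eq (m : Matrix (Fin 2) (Fin 2) ℝ) (z : ℂ) :
    Complex.normSq (m 1 0 * z ^ 2 + (m 1 1 - m 0 0) * z - m 0 1) =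
      axisForm m z ^ 2 + m.discr * z.im ^ 2 := by
  simp only [axisForm, discr_fin_two, trace_fin_two, det_fin_two, Complex.normSq_apply, sq,
    Complex.add_re, Complex.add_im, Complex.sub_re, Complex.sub_im, Complex.mul_re, Complex.mul_im,
    Complex.ofReal_re, Complex.ofReal_im]
  ring

theorem exists_axisForm_eq_zero {m : Matrix (Fin 2) (Fin 2) ℝ} (hm : m.IsHyperbolic) :
    ∃ z : ℍ, axisForm m z = 0 := by
  have hdiscr : m.discr = (m 1 1 - m 0 0) ^ 2 + 4 * m 0 1 * m 1 0 := by
    rw [discr_fin_two, trace_fin_two, det_fin_two]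
    ring
  by_cases hc : m 1 0 = 0
  · have had : m 1 1 - m 0 0 ≠ 0 := by
      intro h
      simp [IsHyperbolic, hdiscr, hc, h] at hm
    refine ⟨⟨⟨m 0 1 / (m 1 1 - m 0 0), 1⟩, one_pos⟩, ?_⟩
    simp [axisForm, hc, mul_div_cancel₀ _ had]
  · -- The axis is a half-circle centred on the real line; take its topmost point.
    have hy : 0 < √m.discr / (2 * |m 1 0|) :=
      div_pos (Real.sqrt_pos.2 hm) (by positivity)
    refine ⟨⟨⟨(m 0 0 - m 1 1) / (2 * m 1 0), √m.discr / (2 * |m 1 0|)⟩, hy⟩, ?_⟩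
    have hy_sq : (√m.discr / (2 * |m 1 0|)) ^ 2 = m.discr / (4 * m 1 0 ^ 2) := by
      rw [div_pow, mul_pow, sq_abs, Real.sq_sqrt hm.le]
      norm_num
    simp only [axisForm, Complex.normSq_mk, ← sq, hy_sq]
    rw [hdiscr]
    field_simp
    ring

theorem discr_coe_specialLinearGroup {R : Type*} [CommRing R] (g : SL(2, R)) :
    (g : Matrix (Fin 2) (Fin 2) R).discr = (g : Matrix (Fin 2) (Fin 2) R).trace ^ 2 - 4 := by
  rw [discr_fin_two, g.det_coe, mul_one]

theorem isHyperbolic_coe_specialLinearGroup_iff {R : Type*} [CommRing R] [LinearOrder R]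
    [IsStrictOrderedRing R] {g : SL(2, R)} :
    (g : Matrix (Fin 2) (Fin 2) R).IsHyperbolic ↔ 2 < |(g : Matrix (Fin 2) (Fin 2) R).trace| := by
  rw [IsHyperbolic, discr_coe_specialLinearGroup, sub_pos, ← abs_two, ← sq_lt_sq]
  norm_num

theorem im_specialLinearGroup_smul (g : SL(2, ℝ)) (z : ℍ) :
    (g • z).im = z.im / Complex.normSq (denom g z) := by
  have him := im_smul_eq_div_normSq (g : GL (Fin 2) ℝ) z
  rwa [SpecialLinearGroup.coeToGL_det, Units.val_one, abs_one, one_mul] at him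

theorem sub_specialLinearGroup_smul (g : SL(2, ℝ)) (z : ℍ) :
    (z : ℂ) - ↑(g • z) = (g 1 0 * z ^ 2 + (g 1 1 - g 0 0) * z - g 0 1) / denom g z := by
  have hdenom : denom g z ≠ 0 := denom_ne_zero _ z
  have hsmul : ↑(g • z) = (g 0 0 * z + g 0 1 : ℂ) / denom g z := coe_specialLinearGroup_apply g z
  have hdenom_eq : denom g z = g 1 0 * z + g 1 1 := rfl
  rw [hsmul, eq_div_iff hdenom, sub_mul, div_mul_cancel₀ _ hdenom, hdenom_eq]
  ring

theorem four_mul_cosh_half_dist_smul_sq (g : SL(2, ℝ)) (z : ℍ) :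
    4 * Real.cosh (dist z (g • z) / 2) ^ 2 =
      (g : Matrix (Fin 2) (Fin 2) ℝ).trace ^ 2 + (axisForm g z / z.im) ^ 2 := by
  have hdenom : Complex.normSq (denom g z) ≠ 0 := normSq_denom_ne_zero _ z.im_ne_zero
  have hdist : dist (z : ℂ) ↑(g • z) ^ 2 =
      (axisForm g z ^ 2 + (g : Matrix (Fin 2) (Fin 2) ℝ).discr * z.im ^ 2) /
        Complex.normSq (denom g z) := by
    rw [Complex.dist_eq, ← Complex.normSq_eq_norm_sq, sub_specialLinearGroup_smul,
      Complex.normSq_div, normSq_fixedPointPolynomial_eq, coe_im]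
  have hcosh : Real.cosh (dist z (g • z)) = 2 * Real.cosh (dist z (g • z) / 2) ^ 2 - 1 := by
    have htwo := Real.cosh_two_mul (dist z (g • z) / 2)
    rw [mul_div_cancel₀ _ two_ne_zero, Real.sinh_sq] at htwo
    linarith
  have him := z.im_ne_zero
  rw [cosh_dist, hdist, im_specialLinearGroup_smul, discr_coe_specialLinearGroup] at hcosh
  field_simp at hcosh ⊢
  linarith

theorem isLeast_range_dist_smul {g : SL(2, ℝ)}
    (hg : (g : Matrix (Fin 2) (Fin 2) ℝ).IsHyperbolic) :
    IsLeast (Set.range fun z : ℍ ↦ dist z (g • z))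
      (2 * Real.arcosh (|(g : Matrix (Fin 2) (Fin 2) ℝ).trace| / 2)) := by
  set t := |(g : Matrix (Fin 2) (Fin 2) ℝ).trace| / 2 with ht
  have ht_one : 1 ≤ t := by linarith [isHyperbolic_coe_specialLinearGroup_iff.1 hg]
  have hcosh (z : ℍ) :
      Real.cosh (dist z (g • z) / 2) ^ 2 = t ^ 2 + (axisForm g z / z.im) ^ 2 / 4 := by
    rw [ht, div_pow, sq_abs]
    linarith [four_mul_cosh_half_dist_smul_sq g z]
  have harcosh (z : ℍ) : Real.arcosh (Real.cosh (dist z (g • z) / 2)) = dist z (g • z) / 2 :=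
    Real.arcosh_cosh (by positivity)
  constructor
  · obtain ⟨z, hz⟩ := exists_axisForm_eq_zero hg
    have hmin : Real.cosh (dist z (g • z) / 2) = t := by
      rw [← sq_eq_sq₀ (by positivity) (by positivity), hcosh, hz]
      simp
    refine ⟨z, ?_⟩
    dsimp only
    rw [← hmin, harcosh]
    ring
  · rintro _ ⟨z, rfl⟩
    have hle : t ≤ Real.cosh (dist z (g • z) / 2) := by
      rw [← sq_le_sq₀ (by positivity) (by positivity), hcosh]
      linarith [sq_nonneg (axisForm g z / z.im)]
    have harcosh_le := (Real.arcosh_le_arcosh (by positivity) (by positivity)).2 hle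
    rw [harcosh] at harcosh_le
    dsimp only
    linarith

theorem translationLength_eq_two_mul_arcosh {g : SL(2, ℝ)}
    (hg : (g : Matrix (Fin 2) (Fin 2) ℝ).IsHyperbolic) :
    translationLength ℍ g = 2 * Real.arcosh (|(g : Matrix (Fin 2) (Fin 2) ℝ).trace| / 2) :=
  (isLeast_range_dist_smul hg).csInf_eq

end TranslationLength

theorem two_mul_arcosh_add_div_sub {a b : ℝ} (ha : 0 ≤ a) (hab : a < b) :
    2 * Real.arcosh ((a + b) / (b - a)) =
      Real.log ((a + b + 2 * √(a * b)) / (a + b - 2 * √(a * b))) := by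
  have hsub : 0 < b - a := sub_pos.2 hab
  have hsq : √(a * b) ^ 2 = a * b := Real.sq_sqrt (mul_nonneg ha (ha.trans hab.le))
  have hfactor : (b - a) ^ 2 = (a + b + 2 * √(a * b)) * (a + b - 2 * √(a * b)) := by
    linear_combination 4 * hsq
  have hsqrt : √(((a + b) / (b - a)) ^ 2 - 1) = 2 * √(a * b) / (b - a) := by
    have hsq_sub_one : ((a + b) / (b - a)) ^ 2 - 1 = (2 * √(a * b) / (b - a)) ^ 2 := by
      field_simp
      linear_combination -4 * hsq
    rw [hsq_sub_one, Real.sqrt_sq (by positivity)]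
  have hplus : a + b + 2 * √(a * b) ≠ 0 := by
    have hb : 0 < b := ha.trans_lt hab
    positivity
  calc 2 * Real.arcosh ((a + b) / (b - a))
      = 2 * Real.log ((a + b + 2 * √(a * b)) / (b - a)) := by
        rw [Real.arcosh, hsqrt, ← add_div]
    _ = Real.log ((a + b + 2 * √(a * b)) ^ 2 / (b - a) ^ 2) := by
        rw [← div_pow, Real.log_pow, Nat.cast_ofNat]
    _ = Real.log ((a + b + 2 * √(a * b)) / (a + b - 2 * √(a * b))) := by
        rw [hfactor, sq, mul_div_mul_left _ _ hplus]

section PartialSums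

variable {x : ℕ → ℝ} {n : ℕ}

theorem sPartial_pos (hx : ∀ i < n, 0 < x i) (hn : n ≠ 0) : 0 < sPartial x n :=
  Finset.sum_pos (fun i hi ↦ hx i (Finset.mem_range.1 hi)) (Finset.nonempty_range_iff.2 hn)

theorem sPartial_lt_sPartial_succ (hx : 0 < x n) : sPartial x n < sPartial x (n + 1) := by
  rw [sPartial, sPartial, Finset.sum_range_succ]
  exact lt_add_of_pos_right _ hx

end PartialSums

theorem trace_gMat (x : ℕ → ℝ) (n : ℕ) :
    (gMat x n).trace =
      2 * ((sPartial x n + sPartial x (n + 1)) / (sPartial x (n + 1) - sPartial x n)) := by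
  rw [gMat, Matrix.trace_fin_two_of, two_mul]

/-- for `n ≥ 1`, the translation length of `g_n` on the upper
half-plane — the infimum over `z ∈ ℍ` of the hyperbolic distance
`dist(z, g_n·z)` — equals
`log((s_{n−1}+s_n+2√(s_{n−1}s_n))/(s_{n−1}+s_n−2√(s_{n−1}s_n)))`. -/
theorem stmt11 (x : ℕ → ℝ) (hx : ∀ n, 0 < x n) (n : ℕ) (hn : 1 ≤ n)
    (g : Matrix.SpecialLinearGroup (Fin 2) ℝ)
    (hg : (g : Matrix (Fin 2) (Fin 2) ℝ) = gMat x n) :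
    (⨅ z : UpperHalfPlane, dist z (g • z)) =
      Real.log
        ((sPartial x n + sPartial x (n + 1) +
            2 * Real.sqrt (sPartial x n * sPartial x (n + 1))) /
          (sPartial x n + sPartial x (n + 1) -
            2 * Real.sqrt (sPartial x n * sPartial x (n + 1)))) := by
  have hpos : 0 < sPartial x n := sPartial_pos (fun i _ ↦ hx i) (Nat.one_le_iff_ne_zero.1 hn)
  have hlt : sPartial x n < sPartial x (n + 1) := sPartial_lt_sPartial_succ (hx n)
  have hone : 1 < (sPartial x n + sPartial x (n + 1)) / (sPartial x (n + 1) - sPartial x n) := by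
    rw [one_lt_div (sub_pos.2 hlt)]
    linarith
  have htrace : |(g : Matrix (Fin 2) (Fin 2) ℝ).trace| / 2 =
      (sPartial x n + sPartial x (n + 1)) / (sPartial x (n + 1) - sPartial x n) := by
    rw [hg, trace_gMat, abs_of_pos (by linarith)]
    ring
  have hhyp : (g : Matrix (Fin 2) (Fin 2) ℝ).IsHyperbolic :=
    isHyperbolic_coe_specialLinearGroup_iff.2 (by linarith)
  calc translationLength UpperHalfPlane g
      = 2 * Real.arcosh (|(g : Matrix (Fin 2) (Fin 2) ℝ).trace| / 2) :=
        translationLength_eq_two_mul_arcosh hhyp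
    _ = _ := by rw [htrace, two_mul_arcosh_add_div_sub hpos.le hlt]
end

section
/- Let a, b, c, d, e : ℤ → ℝ satisfy a_n < b_n < c_n < d_n < e_n and e_n ≤ a_{n+1} for all n ∈ ℤ. For reals u < v < w < x define T(u,v,w,x) = (1/√(r·r'))·[[O', −(O·O' + r·r')], [1, −O]] ∈ SL(2,ℝ), where O = (u+v)/2, r = (v−u)/2, O' = (w+x)/2, r' = (x−w)/2, and set f_n = T(a_n, b_n, c_n, d_n), g_n = T(b_n, c_n, d_n, e_n), and let G be the subgroup of SL(2,ℝ) generated by {f_n, g_n : n ∈ ℤ}. Then G acts properly discontinuously on the upper half-plane ℍ: for all compact subsets K, L ⊆ ℍ, the set {γ ∈ G : (γ·K) ∩ L ≠ ∅} is finite. -/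
/-- For reals `u < v < w < x`, the matrix
`T(u,v,w,x) = (1/√(r·r'))·[[O', −(O·O' + r·r')], [1, −O]]`, where `O = (u+v)/2`,
`r = (v−u)/2`, `O' = (w+x)/2`, `r' = (x−w)/2`. -/
noncomputable def TMat (u v w x : ℝ) : Matrix (Fin 2) (Fin 2) ℝ :=
  (1 / Real.sqrt (((v - u) / 2) * ((x - w) / 2))) •
    !![(w + x) / 2,
        -(((u + v) / 2) * ((w + x) / 2) + ((v - u) / 2) * ((x - w) / 2));
        1, -((u + v) / 2)]

/-!
The transformation `T(u,v,w,x)` satisfies `(Tz - O')(z - O) = -r r'`, so it maps the exterior of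
the half-disk over `[u, v]` into the half-disk over `[w, x]`. Non-overlapping intervals carry
pairwise disjoint half-disks in `ℍ`, so the generators play ping-pong: a nontrivial reduced word
moves every point outside all the half-disks into one of them. The points above the half-circle
over one of the intervals form such an exterior region with nonempty interior, so the orbit map
shows that `1` is isolated in the group. The group is therefore discrete, and discrete subgroups of
`SL(2,ℝ)` act properly discontinuously because the action on `ℍ` is proper.
-/

open Function Set
open scoped MatrixGroups UpperHalfPlane

variable {ι : Type*}

section PingPong

variable {G α : Type*} [Group G] [MulAction G α] {F : ι → G} {D : ι × Bool → Set α} {z : α}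

theorem lift_mk_singleton_smul_mem (hF : ∀ i, ∀ z ∉ D (i, false), F i • z ∈ D (i, true))
    {p : ι × Bool} (hz : z ∉ D (p.1, !p.2)) :
    FreeGroup.lift F (FreeGroup.mk [p]) • z ∈ D p := by
  obtain ⟨i, _ | _⟩ := p
  · -- The ping-pong condition for `(F i)⁻¹` is the contrapositive of the one for `F i`.
    by_contra hmem
    exact hz (by simpa using hF i _ hmem)
  · simpa using hF i z hz

theorem lift_mk_cons_smul_mem (hD : Pairwise (Disjoint on D))
    (hF : ∀ i, ∀ z ∉ D (i, false), F i • z ∈ D (i, true)) (hz : ∀ p, z ∉ D p)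
    {p : ι × Bool} {w : List (ι × Bool)} (hw : FreeGroup.IsReduced (p :: w)) :
    FreeGroup.lift F (FreeGroup.mk (p :: w)) • z ∈ D p := by
  induction w generalizing p with
  | nil => exact lift_mk_singleton_smul_mem hF (hz _)
  | cons q w ih =>
    obtain ⟨hpq, hqw⟩ := FreeGroup.isReduced_cons_cons.1 hw
    have hne : q ≠ (p.1, !p.2) := by
      rintro rfl
      simp at hpq
    rw [← List.singleton_append, ← FreeGroup.mul_mk, map_mul, mul_smul]
    exact lift_mk_singleton_smul_mem hF (disjoint_left.1 (hD hne) (ih hqw))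

theorem eq_one_of_mem_closure_of_smul_notMem (hD : Pairwise (Disjoint on D))
    (hF : ∀ i, ∀ z ∉ D (i, false), F i • z ∈ D (i, true)) (hz : ∀ p, z ∉ D p)
    {γ : G} (hγ : γ ∈ Subgroup.closure (range F)) (hγz : ∀ p, γ • z ∉ D p) : γ = 1 := by
  classical
  rw [← FreeGroup.range_lift_eq_closure] at hγ
  obtain ⟨x, rfl⟩ := hγ
  have hred : FreeGroup.IsReduced x.toWord := FreeGroup.isReduced_toWord
  rw [← FreeGroup.mk_toWord (x := x)] at hγz ⊢
  cases hword : x.toWord with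
  | nil => exact map_one _
  | cons p w =>
    rw [hword] at hred hγz
    exact absurd (lift_mk_cons_smul_mem hD hF hz hred) (hγz p)

end PingPong

theorem discreteTopology_of_isOpen_of_smul_mem {G X : Type*} [Group G] [TopologicalSpace G]
    [SeparatelyContinuousMul G] [TopologicalSpace X] [MulAction G X] [ContinuousSMul G X]
    {U : Set X} (hU : IsOpen U) {z : X} (hz : z ∈ U) (h : ∀ g : G, g • z ∈ U → g = 1) :
    DiscreteTopology G := by
  have hone : {1} = (fun g : G => g • z) ⁻¹' U := by
    refine Subset.antisymm ?_ h
    simpa using hz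
  refine discreteTopology_of_isOpen_singleton_one ?_
  rw [hone]
  exact hU.preimage (by fun_prop)

/-- The closed half-disk in `ℍ` with diameter `[l, r]`, used as a ping-pong set. Since `l` and `r`
are not in `ℍ`, half-disks over adjacent intervals are disjoint although the boundary arc is
included. -/
def halfDisk (l r : ℝ) : Set ℍ :=
  {z | ‖(z : ℂ) - ((l + r) / 2 : ℝ)‖ ≤ (r - l) / 2}

theorem mem_halfDisk {l r : ℝ} {z : ℍ} :
    z ∈ halfDisk l r ↔ ‖(z : ℂ) - ((l + r) / 2 : ℝ)‖ ≤ (r - l) / 2 := Iff.rfl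

theorem isClosed_halfDisk (l r : ℝ) : IsClosed (halfDisk l r) :=
  isClosed_le (by fun_prop) continuous_const

theorem re_mem_Ioo_of_mem_halfDisk {l r : ℝ} {z : ℍ} (hz : z ∈ halfDisk l r) :
    z.re ∈ Ioo l r := by
  have him : ((z : ℂ) - ((l + r) / 2 : ℝ)).im ≠ 0 := by simpa using z.im_ne_zero
  have hlt : |z.re - (l + r) / 2| < (r - l) / 2 := by
    simpa using (Complex.abs_re_lt_norm.2 him).trans_le hz
  rw [abs_lt] at hlt
  constructor <;> linarith

theorem pairwise_disjoint_halfDisk {l r : ι → ℝ}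
    (h : Pairwise (Disjoint on fun i => Ioo (l i) (r i))) :
    Pairwise (Disjoint on fun i => halfDisk (l i) (r i)) := fun _ _ hij =>
  ((h hij).preimage UpperHalfPlane.re).mono (fun _ => re_mem_Ioo_of_mem_halfDisk)
    fun _ => re_mem_Ioo_of_mem_halfDisk

theorem exists_re_mem_Ioo_notMem_halfDisk {l r : ℝ} (hlr : l < r) :
    ∃ z : ℍ, z.re ∈ Ioo l r ∧ z ∉ halfDisk l r := by
  let z : ℍ := ⟨⟨(l + r) / 2, r - l⟩, sub_pos.2 hlr⟩
  have hre : z.re = (l + r) / 2 := rfl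
  have hcenter : (z : ℂ) - ((l + r) / 2 : ℝ) = (r - l : ℝ) * Complex.I := by
    apply Complex.ext <;> simp [z]
  refine ⟨z, by constructor <;> linarith, fun hz => ?_⟩
  have hnorm : r - l ≤ (r - l) / 2 := by
    rwa [mem_halfDisk, hcenter, norm_mul, Complex.norm_I, mul_one, Complex.norm_real,
      Real.norm_of_nonneg (sub_pos.2 hlr).le] at hz
  linarith

theorem nonempty_interior_compl_iUnion_halfDisk {l r : ι → ℝ} (hlr : ∀ i, l i < r i)
    (h : Pairwise (Disjoint on fun i => Ioo (l i) (r i))) :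
    (interior (⋃ i, halfDisk (l i) (r i))ᶜ).Nonempty := by
  obtain _ | ⟨⟨i⟩⟩ := isEmpty_or_nonempty ι
  · simp
  obtain ⟨z, hz, hzi⟩ := exists_re_mem_Ioo_notMem_halfDisk (hlr i)
  have hopen : IsOpen (UpperHalfPlane.re ⁻¹' Ioo (l i) (r i) \ halfDisk (l i) (r i)) :=
    (isOpen_Ioo.preimage UpperHalfPlane.continuous_re).sdiff (isClosed_halfDisk _ _)
  refine ⟨z, mem_interior.2 ⟨_, ?_, hopen, hz, hzi⟩⟩
  rintro y ⟨hy, hyi⟩ hyU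
  obtain ⟨j, hyj⟩ := mem_iUnion.1 hyU
  have hij : i ≠ j := by
    rintro rfl
    exact hyi hyj
  exact disjoint_left.1 (h hij) hy (re_mem_Ioo_of_mem_halfDisk hyj)

section SidePairing

variable {u v w x : ℝ}

theorem det_TMat (huv : u < v) (hwx : w < x) : (TMat u v w x).det = 1 := by
  have hpos : 0 < (v - u) / 2 * ((x - w) / 2) := by
    apply mul_pos <;> linarith
  rw [TMat, Matrix.det_smul, Matrix.det_fin_two_of, Fintype.card_fin, div_pow,
    Real.sq_sqrt hpos.le, one_pow, one_div, inv_mul_eq_one₀ hpos.ne']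
  ring

/-- The matrix `T(u,v,w,x)` as an element of `SL(2,ℝ)`. It pairs the sides of the ideal polygon
bounded by the half-circles over `[u, v]` and `[w, x]`. -/
noncomputable def sidePairing (huv : u < v) (hwx : w < x) : SL(2, ℝ) :=
  ⟨TMat u v w x, det_TMat huv hwx⟩

theorem coe_sidePairing_smul (huv : u < v) (hwx : w < x) (z : ℍ) :
    ((sidePairing huv hwx • z : ℍ) : ℂ) =
      (((w + x) / 2 : ℝ) * z - ((u + v) / 2 * ((w + x) / 2) + (v - u) / 2 * ((x - w) / 2) : ℝ)) /
        (z - ((u + v) / 2 : ℝ)) := by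
  have hpos : 0 < (v - u) / 2 * ((x - w) / 2) := by
    apply mul_pos <;> linarith
  have hscale : ((1 / √((v - u) / 2 * ((x - w) / 2)) : ℝ) : ℂ) ≠ 0 := by
    exact_mod_cast (one_div_pos.2 (Real.sqrt_pos.2 hpos)).ne'
  rw [UpperHalfPlane.coe_specialLinearGroup_apply, ← mul_div_mul_left (_ - _) _ hscale]
  congr 1 <;> simp [sidePairing, TMat] <;> ring

theorem sidePairing_smul_sub_mul_sub (huv : u < v) (hwx : w < x) (z : ℍ) :
    (((sidePairing huv hwx • z : ℍ) : ℂ) - ((w + x) / 2 : ℝ)) * (z - ((u + v) / 2 : ℝ)) =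
      (-((v - u) / 2 * ((x - w) / 2)) : ℝ) := by
  have hz : (z : ℂ) - ((u + v) / 2 : ℝ) ≠ 0 := sub_ne_zero.2 (z.ne_ofReal _)
  rw [coe_sidePairing_smul, sub_mul, div_mul_cancel₀ _ hz]
  push_cast
  ring

theorem sidePairing_smul_mem_halfDisk (huv : u < v) (hwx : w < x) {z : ℍ}
    (hz : z ∉ halfDisk u v) : sidePairing huv hwx • z ∈ halfDisk w x := by
  have hr : 0 < (v - u) / 2 := by linarith
  have hr' : 0 < (x - w) / 2 := by linarith
  have hnorm := congrArg norm (sidePairing_smul_sub_mul_sub huv hwx z)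
  rw [norm_mul, Complex.norm_real, norm_neg, Real.norm_of_nonneg (mul_pos hr hr').le] at hnorm
  rw [mem_halfDisk] at hz ⊢
  push Not at hz
  by_contra! hlt
  exact hnorm.not_gt (mul_comm _ ((x - w) / 2) ▸ mul_lt_mul'' hlt hz hr'.le hr.le)

end SidePairing

theorem discreteTopology_closure_sidePairing {l r : ι × Bool → ℝ} (hlr : ∀ p, l p < r p)
    (hdisj : Pairwise (Disjoint on fun p => Ioo (l p) (r p))) :
    DiscreteTopology (Subgroup.closure
      (range fun i => sidePairing (hlr (i, false)) (hlr (i, true)))) := by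
  obtain ⟨z, hz⟩ := nonempty_interior_compl_iUnion_halfDisk hlr hdisj
  have hcompl {y : ℍ} (hy : y ∈ interior (⋃ p, halfDisk (l p) (r p))ᶜ) (p : ι × Bool) :
      y ∉ halfDisk (l p) (r p) := fun hp => interior_subset hy (mem_iUnion_of_mem p hp)
  refine discreteTopology_of_isOpen_of_smul_mem isOpen_interior hz fun γ hγ => Subtype.ext ?_
  exact eq_one_of_mem_closure_of_smul_notMem (pairwise_disjoint_halfDisk hdisj)
    (fun _ _ => sidePairing_smul_mem_halfDisk _ _) (hcompl hz) γ.2 (hcompl hγ)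

theorem stmt16_general (l r : ι × Bool → ℝ) (hlr : ∀ p, l p < r p)
    (hdisj : Pairwise (Disjoint on fun p => Ioo (l p) (r p)))
    (G : Subgroup SL(2, ℝ))
    (hG : G = Subgroup.closure
      {g : SL(2, ℝ) | ∃ i, (g : Matrix (Fin 2) (Fin 2) ℝ) =
        TMat (l (i, false)) (r (i, false)) (l (i, true)) (r (i, true))}) :
    ∀ K L : Set ℍ, IsCompact K → IsCompact L →
      {γ : SL(2, ℝ) | γ ∈ G ∧ ((fun z => γ • z) '' K ∩ L).Nonempty}.Finite := by
  have hgen : {g : SL(2, ℝ) | ∃ i, (g : Matrix (Fin 2) (Fin 2) ℝ) =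
      TMat (l (i, false)) (r (i, false)) (l (i, true)) (r (i, true))} =
      range fun i => sidePairing (hlr (i, false)) (hlr (i, true)) := by
    ext g
    exact exists_congr fun i => ⟨fun h => Subtype.ext h.symm, fun h => congrArg Subtype.val h.symm⟩
  rw [hgen] at hG
  have : DiscreteTopology G := hG ▸ discreteTopology_closure_sidePairing hlr hdisj
  intro K L hK hL
  exact (Subgroup.properlyDiscontinuousSMul_iff G).1 inferInstance hK hL

section Endpoint

variable {α : Type*}

/-- The left endpoints of the sides of all `f_i` and `g_i`; the right endpoints are
`endpoint b c d e`. The generator `f_i` has index `(i, false)` and `g_i` has index `(i, true)`, and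
the last Boolean is `false` for the source and `true` for the target of a generator. -/
def endpoint (a b c d : ι → α) : (ι × Bool) × Bool → α
  | ((i, false), false) => a i
  | ((i, true), false) => b i
  | ((i, false), true) => c i
  | ((i, true), true) => d i

variable [Preorder α] {a b c d e : ι → α}

theorem endpoint_lt_endpoint (h : ∀ i, a i < b i ∧ b i < c i ∧ c i < d i ∧ d i < e i)
    (p : (ι × Bool) × Bool) : endpoint a b c d p < endpoint b c d e p := by
  obtain ⟨⟨i, _ | _⟩, _ | _⟩ := p <;> simp [endpoint, h i]

theorem Ioo_endpoint_subset (h : ∀ i, a i ≤ b i ∧ b i ≤ c i ∧ c i ≤ d i ∧ d i ≤ e i)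
    (p : (ι × Bool) × Bool) :
    Ioo (endpoint a b c d p) (endpoint b c d e p) ⊆ Ioo (a p.1.1) (e p.1.1) := by
  obtain ⟨⟨i, _ | _⟩, _ | _⟩ := p <;> obtain ⟨hab, hbc, hcd, hde⟩ := h i <;>
    apply Ioo_subset_Ioo <;> simp only [endpoint] <;> order

theorem pairwise_disjoint_Ioo_endpoint
    (h : ∀ i, a i ≤ b i ∧ b i ≤ c i ∧ c i ≤ d i ∧ d i ≤ e i)
    (hdisj : Pairwise (Disjoint on fun i => Ioo (a i) (e i))) :
    Pairwise (Disjoint on fun p => Ioo (endpoint a b c d p) (endpoint b c d e p)) := by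
  intro p q hpq
  by_cases hi : p.1.1 = q.1.1
  · obtain ⟨⟨i, s⟩, s'⟩ := p
    obtain ⟨⟨j, t⟩, t'⟩ := q
    obtain rfl : i = j := hi
    obtain ⟨-, hbc, hcd, -⟩ := h i
    refine disjoint_left.2 fun y hy hy' => hpq ?_
    rw [mem_Ioo] at hy hy'
    cases s <;> cases s' <;> cases t <;> cases t' <;> simp only [endpoint] at hy hy' <;>
      first | rfl | (exfalso; order)
  · exact (hdisj hi).mono (Ioo_endpoint_subset h p) (Ioo_endpoint_subset h q)

theorem pairwise_disjoint_Ioo_of_le_succ [LinearOrder ι] [SuccOrder ι] [IsSuccArchimedean ι]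
    (hae : ∀ i, a i ≤ e i) (hea : ∀ i, e i ≤ a (Order.succ i)) :
    Pairwise (Disjoint on fun i => Ioo (a i) (e i)) :=
  (monotone_of_le_succ fun i _ => (hae i).trans (hea i)).pairwise_disjoint_on_Ioo_succ.mono
    fun _ _ hd => hd.mono (Ioo_subset_Ioo_right (hea _)) (Ioo_subset_Ioo_right (hea _))

end Endpoint

/-- the group `G` generated by the `f_n` and `g_n` acts properly
discontinuously on the upper half-plane: for all compact `K, L ⊆ ℍ`, the set of
`γ ∈ G` with `(γ·K) ∩ L ≠ ∅` is finite. -/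
theorem stmt16 (a b c d e : ℤ → ℝ)
    (h : ∀ n : ℤ, a n < b n ∧ b n < c n ∧ c n < d n ∧ d n < e n ∧ e n ≤ a (n + 1))
    (G : Subgroup (Matrix.SpecialLinearGroup (Fin 2) ℝ))
    (hG : G = Subgroup.closure
      {g : Matrix.SpecialLinearGroup (Fin 2) ℝ | ∃ n : ℤ,
        (g : Matrix (Fin 2) (Fin 2) ℝ) = TMat (a n) (b n) (c n) (d n) ∨
        (g : Matrix (Fin 2) (Fin 2) ℝ) = TMat (b n) (c n) (d n) (e n)}) :
    ∀ K L : Set UpperHalfPlane, IsCompact K → IsCompact L →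
      {γ : Matrix.SpecialLinearGroup (Fin 2) ℝ |
        γ ∈ G ∧ ((fun z => γ • z) '' K ∩ L).Nonempty}.Finite := by
  have hlt : ∀ n, a n < b n ∧ b n < c n ∧ c n < d n ∧ d n < e n := by grind
  have hdisj : Pairwise (Disjoint on fun n => Ioo (a n) (e n)) :=
    pairwise_disjoint_Ioo_of_le_succ (by grind) fun n => (h n).2.2.2.2
  exact stmt16_general (endpoint a b c d) (endpoint b c d e) (endpoint_lt_endpoint hlt)
    (pairwise_disjoint_Ioo_endpoint (by grind) hdisj) G (by simpa [endpoint, exists_or] using hG)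
end
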